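/- arXiv:0805.4120 — 2 statements merged into one kernel-verified Lean document; each statement's English description precedes it below -/
import Mathlib

section
/- For any Laman graph on n vertices, the mixed volume of the Newton polytopes of the 2n polynomials in the system {x_1−c_1, y_1−c_2, x_2−(l_{1,2}−c_1), y_2−c_3} ∪ {(x_i−x_j)²+(y_i−y_j)²−l_{i,j}² : [v_i,v_j] ∈ E∖{[v_1,v_2]}} equals exactly 4^{n−2}. -/
open MeasureTheory Pointwise

/-- Mixed volume of `k` convex bodies in `ℝ^k`, via the standard
inclusion-exclusion formula over Minkowski sums. -/
noncomputable def mixedVolume {k : ℕ} (P : Fin k → Set (Fin k → ℝ)) : ℝ :=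
  ∑ S ∈ Finset.univ.powerset.filter (fun S : Finset (Fin k) => S.Nonempty),
    (-1 : ℝ) ^ (k - S.card) * (volume (∑ i ∈ S, P i)).toReal

/-- A polytope is the convex hull of finitely many points. -/
def IsPolytope {E : Type*} [AddCommMonoid E] [Module ℝ E] (P : Set E) : Prop :=
  ∃ V : Finset E, P = convexHull ℝ (V : Set E)


namespace LamanMV

set_option linter.unusedSectionVars false
set_option linter.unusedSimpArgs false
set_option linter.unusedDecidableInType false

variable {ι : Type*} [Fintype ι] [DecidableEq ι]

/-- The corner simplex `conv (0, e_j : j ∈ I)`. -/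
def body (I : Set ι) : Set (ι → ℝ) :=
  convexHull ℝ (insert 0 ((fun j => (Pi.single j 1 : ι → ℝ)) '' I))

/-- partition function -/
noncomputable def q (w : ι → ι → ℝ) (i : ι) (x : ι → ℝ) : ℝ := 1 + ∑ l, w i l * Real.exp (x l)

/-- Gibbs weights -/
noncomputable def pr (w : ι → ι → ℝ) (i : ι) (x : ι → ℝ) (j : ι) : ℝ :=
  w i j * Real.exp (x j) / q w i x

/-- Hessian of `log q` -/
noncomputable def H (w : ι → ι → ℝ) (i : ι) (x : ι → ℝ) : Matrix ι ι ℝ :=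
  Matrix.of fun j l => (if j = l then pr w i x j else 0) - pr w i x j * pr w i x l

lemma q_ge_one {w : ι → ι → ℝ} (hw : ∀ i j, 0 ≤ w i j) (i : ι) (x : ι → ℝ) : 1 ≤ q w i x := by
  unfold q
  have : 0 ≤ ∑ l, w i l * Real.exp (x l) :=
    Finset.sum_nonneg fun l _ => mul_nonneg (hw i l) (Real.exp_pos _).le
  linarith

lemma q_pos {w : ι → ι → ℝ} (hw : ∀ i j, 0 ≤ w i j) (i : ι) (x : ι → ℝ) : 0 < q w i x :=
  lt_of_lt_of_le one_pos (q_ge_one hw i x)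

lemma pr_nonneg {w : ι → ι → ℝ} (hw : ∀ i j, 0 ≤ w i j) (i : ι) (x : ι → ℝ) (j : ι) :
    0 ≤ pr w i x j :=
  div_nonneg (mul_nonneg (hw i j) (Real.exp_pos _).le) (q_pos hw i x).le

lemma sum_pr {w : ι → ι → ℝ} (hw : ∀ i j, 0 ≤ w i j) (i : ι) (x : ι → ℝ) :
    ∑ j, pr w i x j + 1 / q w i x = 1 := by
  unfold pr
  rw [← Finset.sum_div, ← add_div, div_eq_one_iff_eq (q_pos hw i x).ne']
  unfold q; ring

lemma hasFDerivAt_q (w : ι → ι → ℝ) (i : ι) (x : ι → ℝ) :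
    HasFDerivAt (q w i) (∑ l, (w i l * Real.exp (x l)) •
      (ContinuousLinearMap.proj l : (ι → ℝ) →L[ℝ] ℝ)) x := by
  unfold q
  refine HasFDerivAt.const_add _ ?_
  refine HasFDerivAt.fun_sum fun l _ => ?_
  have h := ((hasFDerivAt_apply (𝕜 := ℝ) l x).exp).const_mul (w i l)
  rw [smul_smul] at h
  exact h

lemma hasFDerivAt_logq {w : ι → ι → ℝ} (hw : ∀ i j, 0 ≤ w i j) (i : ι) (x : ι → ℝ) :
    HasFDerivAt (fun x => Real.log (q w i x)) (∑ l, (pr w i x l) •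
      (ContinuousLinearMap.proj l : (ι → ℝ) →L[ℝ] ℝ)) x := by
  have h := (hasFDerivAt_q w i x).log (q_pos hw i x).ne'
  refine h.congr_fderiv ?_
  rw [Finset.smul_sum]
  refine Finset.sum_congr rfl fun l _ => ?_
  rw [smul_smul, pr, div_eq_inv_mul]

lemma hasFDerivAt_pr {w : ι → ι → ℝ} (hw : ∀ i j, 0 ≤ w i j) (i : ι) (x : ι → ℝ) (j : ι) :
    HasFDerivAt (fun x => pr w i x j) (∑ l, (H w i x j l) •
      (ContinuousLinearMap.proj l : (ι → ℝ) →L[ℝ] ℝ)) x := by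
  have hE : (fun x => pr w i x j) = fun x => w i j * Real.exp (x j - Real.log (q w i x)) := by
    funext x
    rw [Real.exp_sub, Real.exp_log (q_pos hw i x), pr, mul_div_assoc]
  have h := (((hasFDerivAt_apply (𝕜 := ℝ) j x).sub (hasFDerivAt_logq hw i x)).exp).const_mul (w i j)
  have h1 : pr w i x j = w i j * Real.exp (x j - Real.log (q w i x)) := congrFun hE x
  rw [hE]
  refine h.congr_fderiv ?_
  simp only [Pi.sub_apply]
  rw [smul_smul, ← h1]
  ext v
  simp [H, sub_mul, Finset.sum_sub_distrib, mul_sub, Finset.mul_sum, mul_assoc]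

/-- The gradient map. -/
noncomputable def Phi (w : ι → ι → ℝ) (c : ι → ℝ) (S : Finset ι) (x : ι → ℝ) : ι → ℝ :=
  fun j => ∑ i ∈ S, c i * pr w i x j

lemma hasFDerivAt_Phi {w : ι → ι → ℝ} (hw : ∀ i j, 0 ≤ w i j) (c : ι → ℝ) (S : Finset ι)
    (x : ι → ℝ) :
    HasFDerivAt (Phi w c S) (LinearMap.toContinuousLinearMap
      (Matrix.toLin' (∑ i ∈ S, c i • H w i x))) x := by
  rw [hasFDerivAt_pi']
  intro j
  have := HasFDerivAt.fun_sum (u := S) fun i _ => (hasFDerivAt_pr hw i x j).const_mul (c i)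
  refine this.congr_fderiv ?_
  ext v
  simp [Matrix.mulVec, dotProduct, Finset.mul_sum]

lemma Phi_lt {w : ι → ι → ℝ} (hw : ∀ i j, 0 ≤ w i j) {c : ι → ℝ} (hc : ∀ i, 0 < c i)
    {S : Finset ι} (hS : ∀ j, ∃ i ∈ S, 0 < w i j) {x y : ι → ℝ} {j : ι} (h0 : 0 < y j - x j)
    (hmax : ∀ l, y l - x l ≤ y j - x j) : Phi w c S x j < Phi w c S y j := by
  set m := y j - x j with hm
  have hq : ∀ i, q w i y < Real.exp m * q w i x := by
    intro i
    unfold q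
    rw [mul_add, Finset.mul_sum, mul_one]
    refine add_lt_add_of_lt_of_le (Real.one_lt_exp_iff.2 h0) (Finset.sum_le_sum fun l _ => ?_)
    rw [mul_left_comm, ← Real.exp_add]
    refine mul_le_mul_of_nonneg_left (Real.exp_le_exp.2 ?_) (hw i l)
    linarith [hmax l]
  have hy : Real.exp (y j) = Real.exp m * Real.exp (x j) := by
    rw [← Real.exp_add]; congr 1; linarith
  have key : ∀ i, pr w i x j = w i j * Real.exp (y j) / (Real.exp m * q w i x) := by
    intro i
    rw [hy, pr, mul_left_comm, mul_div_mul_left _ _ (Real.exp_pos m).ne']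
  refine Finset.sum_lt_sum (fun i _ => mul_le_mul_of_nonneg_left ?_ (hc i).le) ?_
  · rw [key]
    exact div_le_div_of_nonneg_left (mul_nonneg (hw i j) (Real.exp_pos _).le) (q_pos hw i y)
      (hq i).le
  · obtain ⟨i, hi, hij⟩ := hS j
    refine ⟨i, hi, mul_lt_mul_of_pos_left ?_ (hc i)⟩
    rw [key]
    exact div_lt_div_of_pos_left (mul_pos hij (Real.exp_pos _)) (q_pos hw i y) (hq i)

lemma Phi_injective {w : ι → ι → ℝ} (hw : ∀ i j, 0 ≤ w i j) {c : ι → ℝ} (hc : ∀ i, 0 < c i)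
    {S : Finset ι} (hS : ∀ j, ∃ i ∈ S, 0 < w i j) : Function.Injective (Phi w c S) := by
  have main : ∀ x y : ι → ℝ, Phi w c S x = Phi w c S y → y ≤ x := by
    intro x y hxy l
    have : Nonempty ι := ⟨l⟩
    obtain ⟨j, -, hj⟩ := Finset.exists_max_image Finset.univ (fun l => y l - x l)
      ⟨l, Finset.mem_univ l⟩
    by_contra hl
    have hl' : 0 < y l - x l := by linarith [not_le.1 hl]
    have := Phi_lt hw hc hS (x := x) (y := y) (j := j)
      (lt_of_lt_of_le hl' (hj l (Finset.mem_univ l))) (fun l => hj l (Finset.mem_univ l))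
    rw [hxy] at this
    exact lt_irrefl _ this
  intro x y hxy
  exact le_antisymm (main y x hxy.symm) (main x y hxy)

lemma body_convex (I : Set ι) : Convex ℝ (body I) := convex_convexHull _ _

lemma zero_mem_body (I : Set ι) : (0 : ι → ℝ) ∈ body I :=
  subset_convexHull _ _ (Set.mem_insert _ _)

lemma pr_mem_body {w : ι → ι → ℝ} (hw : ∀ i j, 0 ≤ w i j) (i : ι) (x : ι → ℝ) :
    pr w i x ∈ body {j | 0 < w i j} := by
  have h := (body_convex {j | 0 < w i j}).sum_mem (t := (Finset.univ : Finset (Option ι)))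
    (w := fun o => o.elim (1 / q w i x) (pr w i x))
    (z := fun o => o.elim 0 (fun j => if 0 < w i j then Pi.single j 1 else 0)) ?_ ?_ ?_
  · convert h using 1
    rw [Fintype.sum_option]
    funext l
    simp only [Option.elim_none, Option.elim_some, smul_zero, zero_add, Finset.sum_apply,
      Pi.smul_apply, smul_eq_mul]
    rw [Finset.sum_eq_single l]
    · by_cases hl : 0 < w i l
      · simp [hl]
      · have : w i l = 0 := le_antisymm (not_lt.1 hl) (hw i l)
        simp [pr, this]
    · intro b _ hb
      by_cases hl : 0 < w i b
      · simp [hl, hb.symm]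
      · simp [hl]
    · simp
  · rintro (_ | j) _
    · exact (one_div_pos.2 (q_pos hw i x)).le
    · exact pr_nonneg hw i x j
  · rw [Fintype.sum_option, add_comm]
    exact sum_pr hw i x
  · rintro (_ | j) _
    · exact zero_mem_body _
    · by_cases hl : 0 < w i j
      · simp only [Option.elim_some, hl, if_true]
        exact subset_convexHull _ _ (Set.mem_insert_of_mem _ ⟨j, hl, rfl⟩)
      · simp only [Option.elim_some, hl, if_false]
        exact zero_mem_body _

/-- The Minkowski sum of the scaled simplices -/
def A (w : ι → ι → ℝ) (c : ι → ℝ) (S : Finset ι) : Set (ι → ℝ) :=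
  ∑ i ∈ S, c i • body {j | 0 < w i j}

lemma A_convex (w : ι → ι → ℝ) (c : ι → ℝ) (S : Finset ι) : Convex ℝ (A w c S) := by
  unfold A
  exact convex_sum _ fun i _ => (body_convex _).smul (c i)

lemma mem_A {w : ι → ι → ℝ} {c : ι → ℝ} {S : Finset ι} {a : ι → ℝ} :
    a ∈ A w c S ↔ ∃ g : ι → ι → ℝ, (∀ i ∈ S, g i ∈ body {j | 0 < w i j}) ∧
      ∑ i ∈ S, c i • g i = a := by
  unfold A
  rw [Set.mem_finsetSum]
  constructor
  · rintro ⟨g, hg, rfl⟩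
    have : ∀ i, ∃ b, i ∈ S → b ∈ body {j | 0 < w i j} ∧ c i • b = g i := by
      intro i
      by_cases hi : i ∈ S
      · obtain ⟨b, hb, h⟩ := hg hi
        exact ⟨b, fun _ => ⟨hb, h⟩⟩
      · exact ⟨0, fun h => absurd h hi⟩
    choose b hb using this
    exact ⟨b, fun i hi => (hb i hi).1, Finset.sum_congr rfl fun i hi => (hb i hi).2⟩
  · rintro ⟨g, hg, rfl⟩
    exact ⟨fun i => c i • g i, fun {i} hi => ⟨g i, hg i hi, rfl⟩, rfl⟩

lemma Phi_mem_A {w : ι → ι → ℝ} (hw : ∀ i j, 0 ≤ w i j) (c : ι → ℝ) (S : Finset ι) (x : ι → ℝ) :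
    Phi w c S x ∈ A w c S := by
  rw [mem_A]
  refine ⟨fun i => pr w i x, fun i _ => pr_mem_body hw i x, ?_⟩
  funext j
  simp [Phi]

lemma body_support {w : ι → ι → ℝ} (hw : ∀ i j, 0 ≤ w i j) (i : ι) {a : ι → ℝ}
    (ha : a ∈ body {j | 0 < w i j}) (x : ι → ℝ) :
    ∑ j, a j * x j ≤ Real.log (q w i x) + ∑ j, |Real.log (w i j)| := by
  set R := Real.log (q w i x) + ∑ j, |Real.log (w i j)|
  have hlin : IsLinearMap ℝ (fun a : ι → ℝ => ∑ j, a j * x j) := by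
    constructor
    · intro a b; simp [add_mul, Finset.sum_add_distrib]
    · intro r a; simp [Finset.mul_sum, mul_assoc]
  have hsub : body {j | 0 < w i j} ⊆ {a | ∑ j, a j * x j ≤ R} := by
    refine convexHull_min ?_ (convex_halfSpace_le hlin R)
    have hs : 0 ≤ ∑ j, |Real.log (w i j)| := Finset.sum_nonneg fun _ _ => abs_nonneg _
    rintro _ (rfl | ⟨j, hj, rfl⟩)
    · simp only [Set.mem_ofPred_eq, Pi.zero_apply, zero_mul, Finset.sum_const_zero]
      exact add_nonneg (Real.log_nonneg (q_ge_one hw i x)) hs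
    · simp only [Set.mem_ofPred_eq] at hj ⊢
      have e : ∑ l, (Pi.single j 1 : ι → ℝ) l * x l = x j := by
        rw [Finset.sum_eq_single j] <;> simp +contextual [Pi.single_apply]
      rw [e]
      have h1 : w i j * Real.exp (x j) ≤ q w i x := by
        have := Finset.single_le_sum (f := fun l => w i l * Real.exp (x l))
          (fun l _ => mul_nonneg (hw i l) (Real.exp_pos _).le) (Finset.mem_univ j)
        unfold q
        linarith
      have h2 := Real.log_le_log (mul_pos hj (Real.exp_pos _)) h1
      rw [Real.log_mul hj.ne' (Real.exp_pos _).ne', Real.log_exp] at h2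
      have h3 := Finset.single_le_sum (f := fun l => |Real.log (w i l)|)
          (fun l _ => abs_nonneg _) (Finset.mem_univ j)
      have h4 := neg_abs_le (Real.log (w i j))
      show x j ≤ Real.log (q w i x) + ∑ j, |Real.log (w i j)|
      linarith
  exact hsub ha

lemma interior_subset_range {w : ι → ι → ℝ} (hw : ∀ i j, 0 ≤ w i j) {c : ι → ℝ}
    (hc : ∀ i, 0 < c i) (S : Finset ι) : interior (A w c S) ⊆ Set.range (Phi w c S) := by
  intro y hy
  set C := ∑ i ∈ S, c i * ∑ j, |Real.log (w i j)| with hC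
  let psi : (ι → ℝ) → ℝ := fun x => ∑ i ∈ S, c i * Real.log (q w i x) - ∑ j, y j * x j
  have hd : ∀ x, HasFDerivAt psi (∑ l, (Phi w c S x l - y l) •
      (ContinuousLinearMap.proj l : (ι → ℝ) →L[ℝ] ℝ)) x := by
    intro x
    have h1 := HasFDerivAt.fun_sum (u := S) fun i _ => (hasFDerivAt_logq hw i x).const_mul (c i)
    have h2 := HasFDerivAt.fun_sum (u := Finset.univ) fun j _ =>
      (hasFDerivAt_apply (𝕜 := ℝ) j x).const_mul (y j)
    refine (h1.sub h2).congr_fderiv ?_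
    ext v
    simp [Phi, sub_mul, Finset.sum_sub_distrib, Finset.sum_mul, Finset.mul_sum, mul_assoc]
    rw [Finset.sum_comm]
  have hcont : Continuous psi := continuous_iff_continuousAt.2 fun x => (hd x).continuousAt
  have hsup : ∀ a ∈ A w c S, ∀ x : ι → ℝ, ∑ j, a j * x j ≤ ∑ i ∈ S, c i * Real.log (q w i x) + C := by
    intro a ha x
    obtain ⟨g, hg, rfl⟩ := mem_A.1 ha
    have : ∑ j, (∑ i ∈ S, c i • g i) j * x j = ∑ i ∈ S, c i * ∑ j, g i j * x j := by
      simp [Finset.sum_mul, Finset.mul_sum, mul_assoc]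
      rw [Finset.sum_comm]
    rw [this, hC, ← Finset.sum_add_distrib]
    refine Finset.sum_le_sum fun i hi => ?_
    rw [← mul_add]
    exact mul_le_mul_of_nonneg_left (body_support hw i (hg i hi) x) (hc i).le
  obtain ⟨δ, hδ, hball⟩ := Metric.nhds_basis_closedBall.mem_iff.1 (mem_interior_iff_mem_nhds.1 hy)
  have hco : ∀ x j, δ * |x j| ≤ psi x + C := by
    intro x j
    have key : ∀ s : ℝ, |s| ≤ 1 → δ * (s * x j) ≤ psi x + C := by
      intro s hs
      have hmem : y + Pi.single j (δ * s) ∈ A w c S := by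
        apply hball
        rw [Metric.mem_closedBall, dist_eq_norm, add_sub_cancel_left, Pi.norm_single,
          norm_mul, Real.norm_eq_abs, Real.norm_eq_abs, abs_of_pos hδ]
        nlinarith
      have := hsup _ hmem x
      have e : ∑ l, (y + Pi.single j (δ * s) : ι → ℝ) l * x l = ∑ l, y l * x l + δ * s * x j := by
        simp only [Pi.add_apply, add_mul, Finset.sum_add_distrib]
        congr 1
        rw [Finset.sum_eq_single j] <;> simp +contextual [Pi.single_apply]
      rw [e] at this
      show δ * (s * x j) ≤ ∑ i ∈ S, c i * Real.log (q w i x) - ∑ j, y j * x j + C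
      linarith
    rcases abs_cases (x j) with ⟨h, _⟩ | ⟨h, _⟩
    · rw [h]; simpa using key 1 (by simp)
    · rw [h]; simpa using key (-1) (by simp)
  have hC' : ∀ x, 0 ≤ psi x + C := by
    intro x
    have := hsup y (interior_subset hy) x
    show 0 ≤ ∑ i ∈ S, c i * Real.log (q w i x) - ∑ j, y j * x j + C
    linarith
  have hnorm : ∀ x, δ * ‖x‖ ≤ psi x + C := by
    intro x
    rw [← le_div_iff₀' hδ]
    refine (pi_norm_le_iff_of_nonneg (div_nonneg (hC' x) hδ.le)).2 fun j => ?_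
    rw [le_div_iff₀' hδ]
    exact hco x j
  have htend : Filter.Tendsto psi (Filter.cocompact _) Filter.atTop := by
    have h1 : Filter.Tendsto (fun x : ι → ℝ => δ * ‖x‖ - C) (Filter.cocompact _) Filter.atTop :=
      Filter.tendsto_atTop_add_const_right _ _
        ((tendsto_norm_cocompact_atTop).const_mul_atTop hδ)
    exact Filter.tendsto_atTop_mono (fun x => by linarith [hnorm x]) h1
  obtain ⟨x, hx⟩ := hcont.exists_forall_le htend
  have hz := IsLocalMin.hasFDerivAt_eq_zero (Filter.Eventually.of_forall hx) (hd x)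
  refine ⟨x, ?_⟩
  funext j
  have := congrArg (fun f : (ι → ℝ) →L[ℝ] ℝ => f (Pi.single j 1)) hz
  simp [Pi.single_apply] at this
  linarith

lemma H_posSemidef {w : ι → ι → ℝ} (hw : ∀ i j, 0 ≤ w i j) (i : ι) (x : ι → ℝ) :
    (H w i x).PosSemidef := by
  refine Matrix.PosSemidef.of_dotProduct_mulVec_nonneg ?_ fun v => ?_
  · ext a b
    by_cases h : a = b
    · simp [H, h]
    · have h' : ¬ b = a := fun e => h e.symm
      simp [H, h, h', mul_comm]
  · have e : star v ⬝ᵥ (H w i x).mulVec v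
        = ∑ j, pr w i x j * v j ^ 2 - (∑ j, pr w i x j * v j) ^ 2 := by
      simp only [H, dotProduct, Matrix.mulVec, Matrix.of_apply, sub_mul, Finset.sum_sub_distrib,
        ite_mul, zero_mul, Finset.sum_ite_eq, Finset.mem_univ, if_true, mul_sub, star_trivial]
      congr 1
      · exact Finset.sum_congr rfl fun j _ => by ring
      · rw [sq, Finset.sum_mul_sum]
        refine Finset.sum_congr rfl fun a _ => ?_
        rw [Finset.mul_sum]
        exact Finset.sum_congr rfl fun j _ => by ring
    rw [e]
    have hs : ∑ j, pr w i x j ≤ 1 := by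
      have := sum_pr hw i x
      have := (one_div_pos.2 (q_pos hw i x))
      linarith
    have cs := Finset.sum_sq_le_sum_mul_sum_of_sq_le_mul Finset.univ
      (r := fun j => pr w i x j * v j) (f := fun j => pr w i x j)
      (g := fun j => pr w i x j * v j ^ 2) (fun j _ => pr_nonneg hw i x j)
      (fun j _ => mul_nonneg (pr_nonneg hw i x j) (sq_nonneg _)) (fun j _ => le_of_eq (by ring))
    have hn : 0 ≤ ∑ j, pr w i x j * v j ^ 2 :=
      Finset.sum_nonneg fun j _ => mul_nonneg (pr_nonneg hw i x j) (sq_nonneg _)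
    nlinarith

lemma sum_H_det_nonneg {w : ι → ι → ℝ} (hw : ∀ i j, 0 ≤ w i j) {c : ι → ℝ} (hc : ∀ i, 0 < c i)
    (S : Finset ι) (x : ι → ℝ) : 0 ≤ (∑ i ∈ S, c i • H w i x).det :=
  (Matrix.posSemidef_sum S fun i _ => (H_posSemidef hw i x).smul (hc i).le).det_nonneg

theorem volume_A {w : ι → ι → ℝ} (hw : ∀ i j, 0 ≤ w i j) {c : ι → ℝ} (hc : ∀ i, 0 < c i)
    (S : Finset ι) :
    volume (A w c S) = ∫⁻ x, ENNReal.ofReal (∑ i ∈ S, c i • H w i x).det := by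
  by_cases hS : ∀ j, ∃ i ∈ S, 0 < w i j
  · have h1 := lintegral_abs_det_fderiv_eq_addHaar_image volume MeasurableSet.univ
      (fun x _ => (hasFDerivAt_Phi hw c S x).hasFDerivWithinAt)
      ((Phi_injective hw hc hS).injOn (s := Set.univ))
    rw [Measure.restrict_univ, Set.image_univ] at h1
    have h2 : volume (A w c S) = volume (Set.range (Phi w c S)) := by
      apply le_antisymm
      · rw [← measure_congr (interior_ae_eq_of_null_frontier
          ((A_convex w c S).addHaar_frontier volume))]
        exact measure_mono (interior_subset_range hw hc S)
      · refine measure_mono ?_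
        rintro _ ⟨x, rfl⟩
        exact Phi_mem_A hw c S x
    rw [h2, ← h1]
    refine lintegral_congr fun x => ?_
    rw [LinearMap.det_toContinuousLinearMap, LinearMap.det_toLin',
      abs_of_nonneg (sum_H_det_nonneg hw hc S x)]
  · push Not at hS
    obtain ⟨j, hj⟩ := hS
    have hj' : ∀ i ∈ S, w i j = 0 := fun i hi => le_antisymm (hj i hi) (hw i j)
    have e1 : ∀ x, (∑ i ∈ S, c i • H w i x).det = 0 := by
      intro x
      refine Matrix.det_eq_zero_of_row_eq_zero j fun l => ?_
      rw [Matrix.sum_apply]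
      refine Finset.sum_eq_zero fun i hi => ?_
      simp [H, pr, hj' i hi]
    simp only [e1, ENNReal.ofReal_zero, lintegral_zero]
    have hlin : IsLinearMap ℝ (fun a : ι → ℝ => a j) := ⟨fun _ _ => rfl, fun _ _ => rfl⟩
    have hsub : A w c S ⊆ (LinearMap.ker (LinearMap.proj j : (ι → ℝ) →ₗ[ℝ] ℝ) : Set (ι → ℝ)) := by
      intro a ha
      obtain ⟨g, hg, rfl⟩ := mem_A.1 ha
      simp only [SetLike.mem_coe, LinearMap.mem_ker, LinearMap.proj_apply, Finset.sum_apply,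
        Pi.smul_apply, smul_eq_mul]
      refine Finset.sum_eq_zero fun i hi => ?_
      have : body {l | 0 < w i l} ⊆ {a | a j = 0} := by
        refine convexHull_min ?_ (convex_hyperplane hlin 0)
        rintro _ (rfl | ⟨l, hl, rfl⟩)
        · simp
        · have : l ≠ j := by
            rintro rfl
            exact absurd (hj' i hi) (ne_of_gt hl)
          simp [this.symm]
      rw [show g i j = 0 from this (hg i hi), mul_zero]
    refine measure_mono_null hsub (Measure.addHaar_submodule _ _ ?_)
    intro htop
    have : (Pi.single j 1 : ι → ℝ) ∈ LinearMap.ker (LinearMap.proj j : (ι → ℝ) →ₗ[ℝ] ℝ) := by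
      rw [htop]; trivial
    simp at this

/-- mixed discriminant -/
noncomputable def D (M : ι → Matrix ι ι ℝ) : ℝ :=
  ∑ σ : Equiv.Perm ι, (Matrix.of fun r c => M (σ r) r c).det

lemma D_gram (B : ι → Matrix ι ι ℝ) : D (fun i => (B i).transpose * B i) =
    ∑ g : ι → ι, (Matrix.of fun i c => B i (g i) c).det ^ 2 := by
  unfold D
  have h1 : ∀ σ : Equiv.Perm ι,
      (Matrix.of fun r c => ((B (σ r)).transpose * B (σ r)) r c).det =
      ∑ g : ι → ι, (∏ r, B (σ r) (g (σ r)) r) *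
        (((Equiv.Perm.sign σ : ℤ) : ℝ) * (Matrix.of fun i c => B i (g i) c).det) := by
    intro σ
    have e : (Matrix.of fun r c => ((B (σ r)).transpose * B (σ r)) r c) =
        fun r => ∑ a, B (σ r) a r • B (σ r) a := by
      funext r c
      simp [Matrix.mul_apply]
    have e2 : (Matrix.of fun r c => ((B (σ r)).transpose * B (σ r)) r c).det =
        ∑ f : ι → ι, (Matrix.detRowAlternating (R := ℝ) (n := ι))
          (fun r => B (σ r) (f r) r • B (σ r) (f r)) := by
      rw [e]
      exact (Matrix.detRowAlternating (R := ℝ) (n := ι)).toMultilinearMap.map_sum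
        (fun r a => B (σ r) a r • B (σ r) a)
    rw [e2]
    rw [← (Equiv.arrowCongr σ (Equiv.refl ι)).symm.sum_comp]
    refine Finset.sum_congr rfl fun g _ => ?_
    have e3 := (Matrix.detRowAlternating (R := ℝ) (n := ι)).toMultilinearMap.map_smul_univ
      (fun r => B (σ r) (g (σ r)) r) (fun r => B (σ r) (g (σ r)))
    rw [← Matrix.det_permute σ]
    exact e3
  simp only [h1]
  rw [Finset.sum_comm]
  refine Finset.sum_congr rfl fun g _ => ?_
  rw [sq]
  conv_rhs => rw [Matrix.det_apply' (Matrix.of fun i c => B i (g i) c), Finset.sum_mul]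
  refine Finset.sum_congr rfl fun σ _ => ?_
  simp only [Matrix.of_apply, Matrix.det_apply']
  ring

lemma exists_gram {M : Matrix ι ι ℝ} (hM : M.PosSemidef) :
    ∃ B : Matrix ι ι ℝ, M = B.transpose * B := by
  open scoped MatrixOrder Matrix.Norms.L2Operator in
  obtain ⟨B, hB⟩ := CStarAlgebra.nonneg_iff_eq_star_mul_self.mp hM.nonneg
  exact ⟨B, by rw [hB]; rfl⟩

lemma D_nonneg {M : ι → Matrix ι ι ℝ} (hM : ∀ i, (M i).PosSemidef) : 0 ≤ D M := by
  choose B hB using fun i => exists_gram (hM i)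
  have : M = fun i => (B i).transpose * B i := funext hB
  rw [this, D_gram]
  exact Finset.sum_nonneg fun _ _ => sq_nonneg _

lemma D_smul (c : ι → ℝ) (M : ι → Matrix ι ι ℝ) :
    D (fun i => c i • M i) = (∏ i, c i) * D M := by
  unfold D
  rw [Finset.mul_sum]
  refine Finset.sum_congr rfl fun σ _ => ?_
  have e3 := (Matrix.detRowAlternating (R := ℝ) (n := ι)).toMultilinearMap.map_smul_univ
      (fun r => c (σ r)) (fun r => M (σ r) r)
  rw [Equiv.prod_comp σ c] at e3
  exact e3

lemma D_const (M : Matrix ι ι ℝ) : D (fun _ => M) = (Fintype.card ι).factorial * M.det := by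
  unfold D
  rw [Finset.sum_const, Finset.card_univ, Fintype.card_perm, nsmul_eq_mul]
  rfl

lemma alt_sum (T : Finset ι) :
    ∑ S : Finset ι, (if T ⊆ S then (-1 : ℝ) ^ (Fintype.card ι - S.card) else 0) =
      if T = Finset.univ then 1 else 0 := by
  have h : ∑ S : Finset ι, (if T ⊆ S then (-1 : ℝ) ^ (Fintype.card ι - S.card) else 0) =
      ∑ U ∈ (Tᶜ).powerset, (-1 : ℝ) ^ U.card := by
    rw [← Finset.sum_filter]
    refine Finset.sum_bij' (fun S _ => Sᶜ) (fun U _ => Uᶜ) ?_ ?_ ?_ ?_ ?_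
    · intro S hS
      simpa using hS
    · intro U hU
      simp only [Finset.mem_powerset] at hU
      simp only [Finset.mem_filter, Finset.mem_univ, true_and]
      exact Finset.subset_compl_comm.1 hU
    · intro S _; simp
    · intro U _; simp
    · intro S _; rw [Finset.card_compl]
  rw [h]
  have := Finset.sum_powerset_neg_one_pow_card (x := Tᶜ)
  have h2 := congrArg (Int.cast : ℤ → ℝ) this
  push_cast at h2
  rw [h2]
  simp [Finset.compl_eq_empty_iff]

lemma D_eq_alt (M : ι → Matrix ι ι ℝ) :
    ∑ S : Finset ι, (-1 : ℝ) ^ (Fintype.card ι - S.card) * (∑ i ∈ S, M i).det = D M := by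
  have h1 : ∀ S : Finset ι, (∑ i ∈ S, M i).det =
      ∑ f : ι → ι, if Finset.univ.image f ⊆ S then
        (Matrix.of fun r c => M (f r) r c).det else 0 := by
    intro S
    have e : (∑ i ∈ S, M i) = fun r => ∑ i ∈ S, M i r := by
      funext r c
      simp [Matrix.sum_apply]
    have e2 := (Matrix.detRowAlternating (R := ℝ) (n := ι)).toMultilinearMap.map_sum_finset
      (fun r i => M i r) (fun _ => S)
    rw [← Finset.sum_filter]
    rw [e]
    refine e2.trans (Finset.sum_congr ?_ fun f _ => rfl)
    ext f
    simp [Fintype.mem_piFinset, Finset.subset_iff]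
  simp only [h1, Finset.mul_sum]
  rw [Finset.sum_comm]
  have h2 : ∀ f : ι → ι, ∑ S : Finset ι, (-1 : ℝ) ^ (Fintype.card ι - S.card) *
      (if Finset.univ.image f ⊆ S then (Matrix.of fun r c => M (f r) r c).det else 0) =
      if Function.Bijective f then (Matrix.of fun r c => M (f r) r c).det else 0 := by
    intro f
    have := alt_sum (Finset.univ.image f)
    have e : ∀ S : Finset ι, (-1 : ℝ) ^ (Fintype.card ι - S.card) *
      (if Finset.univ.image f ⊆ S then (Matrix.of fun r c => M (f r) r c).det else 0) =
      (if Finset.univ.image f ⊆ S then (-1 : ℝ) ^ (Fintype.card ι - S.card) else 0) *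
        (Matrix.of fun r c => M (f r) r c).det := by
      intro S
      split_ifs <;> simp
    simp only [e]
    rw [← Finset.sum_mul, this]
    have hb : Finset.univ.image f = Finset.univ ↔ Function.Bijective f := by
      rw [← Finite.surjective_iff_bijective]
      simp [Finset.eq_univ_iff_forall, Function.Surjective]
    by_cases hf : Function.Bijective f
    · rw [if_pos hf, if_pos (hb.2 hf), one_mul]
    · rw [if_neg hf, if_neg (fun h => hf (hb.1 h)), zero_mul]
  simp only [h2]
  rw [← Finset.sum_filter]
  unfold D
  refine (Finset.sum_bij (fun (σ : Equiv.Perm ι) _ => (σ : ι → ι)) ?_ ?_ ?_ ?_).symm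
  · intro σ _
    simp [σ.bijective]
  · intro σ _ τ _ h
    exact DFunLike.coe_injective h
  · intro f hf
    exact ⟨Equiv.ofBijective f (Finset.mem_filter.1 hf).2, Finset.mem_univ _, rfl⟩
  · intro σ _; rfl

lemma continuous_pr {w : ι → ι → ℝ} (hw : ∀ i j, 0 ≤ w i j) (i j : ι) :
    Continuous fun x => pr w i x j :=
  continuous_iff_continuousAt.2 fun x => (hasFDerivAt_pr hw i x j).continuousAt

lemma continuous_H {w : ι → ι → ℝ} (hw : ∀ i j, 0 ≤ w i j) (i : ι) :
    Continuous fun x => H w i x := by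
  refine continuous_matrix fun a b => ?_
  have h1 := continuous_pr hw i a
  have h2 := continuous_pr hw i b
  unfold H
  simp only [Matrix.of_apply]
  split_ifs
  · exact h1.sub (h1.mul h2)
  · exact continuous_const.sub (h1.mul h2)

lemma continuous_D : Continuous (D : (ι → Matrix ι ι ℝ) → ℝ) := by
  unfold D
  refine continuous_finsetSum _ fun σ _ => Continuous.matrix_det ?_
  refine continuous_matrix fun a b => ?_
  have h : Continuous fun M : ι → Matrix ι ι ℝ => M (σ a) a b :=
    (continuous_apply (σ a)).matrix_elem a b
  exact h

lemma volume_A_lt_top (w : ι → ι → ℝ) (c : ι → ℝ) (S : Finset ι) : volume (A w c S) < ⊤ := by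
  have : IsCompact (A w c S) := by
    unfold A
    induction S using Finset.induction_on with
    | empty => simp
    | insert a s ha ih =>
      rw [Finset.sum_insert ha]
      refine IsCompact.add (IsCompact.smul (c a) ?_) ih
      exact Set.Finite.isCompact_convexHull (𝕜 := ℝ) (Set.Finite.insert _ (Set.toFinite _))
  exact this.measure_lt_top

lemma det_integrable {w : ι → ι → ℝ} (hw : ∀ i j, 0 ≤ w i j) {c : ι → ℝ} (hc : ∀ i, 0 < c i)
    (S : Finset ι) : Integrable (fun x => (∑ i ∈ S, c i • H w i x).det) := by
  have hcont : Continuous (fun x => (∑ i ∈ S, c i • H w i x).det) :=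
    Continuous.matrix_det (continuous_finsetSum _ fun i _ => (continuous_H hw i).const_smul (c i))
  refine ⟨hcont.aestronglyMeasurable, ?_⟩
  rw [hasFiniteIntegral_iff_ofReal (Filter.Eventually.of_forall (sum_H_det_nonneg hw hc S)),
    ← volume_A hw hc S]
  exact volume_A_lt_top w c S

lemma volume_A_toReal {w : ι → ι → ℝ} (hw : ∀ i j, 0 ≤ w i j) {c : ι → ℝ} (hc : ∀ i, 0 < c i)
    (S : Finset ι) :
    (volume (A w c S)).toReal = ∫ x, (∑ i ∈ S, c i • H w i x).det := by
  rw [volume_A hw hc S, integral_eq_lintegral_of_nonneg_ae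
    (Filter.Eventually.of_forall (sum_H_det_nonneg hw hc S))
    (det_integrable hw hc S).aestronglyMeasurable]

/-- integral of the mixed discriminant -/
noncomputable def J (w : ι → ι → ℝ) : ℝ := ∫ x, D (fun i => H w i x)

/-- The mixed volume, with all subsets. -/
noncomputable def mv (w : ι → ι → ℝ) (c : ι → ℝ) : ℝ :=
  ∑ S : Finset ι, (-1 : ℝ) ^ (Fintype.card ι - S.card) * (volume (A w c S)).toReal

lemma D_integrable {w : ι → ι → ℝ} (hw : ∀ i j, 0 ≤ w i j) :
    Integrable (fun x => D (fun i => H w i x)) := by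
  have : (fun x => D (fun i => H w i x)) = fun x => ∑ S : Finset ι,
      (-1 : ℝ) ^ (Fintype.card ι - S.card) * (∑ i ∈ S, (1 : ℝ) • H w i x).det := by
    funext x
    simp only [one_smul]
    exact (D_eq_alt _).symm
  rw [this]
  refine integrable_finsetSum _ fun S _ => ?_
  exact (det_integrable hw (c := fun _ => 1) (fun _ => one_pos) S).const_mul _

theorem mv_eq {w : ι → ι → ℝ} (hw : ∀ i j, 0 ≤ w i j) {c : ι → ℝ} (hc : ∀ i, 0 < c i) :
    mv w c = (∏ i, c i) * J w := by
  unfold mv J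
  simp only [volume_A_toReal hw hc]
  rw [← integral_const_mul]
  have e : ∀ x, (∏ i, c i) * D (fun i => H w i x) = ∑ S : Finset ι,
      (-1 : ℝ) ^ (Fintype.card ι - S.card) * (∑ i ∈ S, c i • H w i x).det := fun x => by
    rw [← D_smul, ← D_eq_alt]
  simp only [e, ← integral_const_mul]
  rw [← integral_finsetSum]
  intro S _
  exact (det_integrable hw hc S).const_mul _

lemma J_congr {w w' : ι → ι → ℝ} (hw : ∀ i j, 0 ≤ w i j) (hw' : ∀ i j, 0 ≤ w' i j)
    (h : ∀ i j, 0 < w i j ↔ 0 < w' i j) : J w = J w' := by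
  have h1 := mv_eq hw (c := fun _ => 1) (fun _ => one_pos)
  have h2 := mv_eq hw' (c := fun _ => 1) (fun _ => one_pos)
  simp only [Finset.prod_const_one, one_mul] at h1 h2
  rw [← h1, ← h2]
  have hA : ∀ S, A w (fun _ => 1) S = A w' (fun _ => 1) S := by
    intro S
    unfold A
    simp only [h]
  unfold mv
  simp only [hA]

lemma J_lintegral {w : ι → ι → ℝ} (hw : ∀ i j, 0 ≤ w i j) :
    ENNReal.ofReal (J w) = ∫⁻ x, ENNReal.ofReal (D (fun i => H w i x)) :=
  ofReal_integral_eq_lintegral_ofReal (D_integrable hw)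
    (Filter.Eventually.of_forall fun x => D_nonneg fun i => H_posSemidef hw i x)

lemma J_nonneg {w : ι → ι → ℝ} (hw : ∀ i j, 0 ≤ w i j) : 0 ≤ J w :=
  integral_nonneg fun x => D_nonneg fun i => H_posSemidef hw i x

theorem J_mono {w w' : ι → ι → ℝ} (hw : ∀ i j, 0 ≤ w i j) (hw' : ∀ i j, 0 ≤ w' i j)
    (h : ∀ i j, 0 < w i j → 0 < w' i j) : J w ≤ J w' := by
  let v : ℕ → ι → ι → ℝ := fun n i j => w i j + (1 / ((n : ℝ) + 1)) * w' i j
  have hv : ∀ n i j, 0 ≤ v n i j := fun n i j => by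
    have := hw i j
    have := hw' i j
    positivity
  have hJ : ∀ n, J (v n) = J w' := by
    intro n
    refine J_congr (hv n) hw' fun i j => ⟨fun hp => ?_, fun hp => ?_⟩
    · by_contra hc
      have h0 : w' i j = 0 := le_antisymm (not_lt.1 hc) (hw' i j)
      have h1 : w i j = 0 := le_antisymm (not_lt.1 fun h2 => hc (h i j h2)) (hw i j)
      simp [v, h0, h1] at hp
    · have := hw i j
      show 0 < w i j + (1 / ((n : ℝ) + 1)) * w' i j
      positivity
  have hlimv : ∀ i j, Filter.Tendsto (fun n => v n i j) Filter.atTop (nhds (w i j)) := by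
    intro i j
    have := (tendsto_one_div_add_atTop_nhds_zero_nat (𝕜 := ℝ)).mul_const (w' i j)
    simpa [v] using this.const_add (w i j)
  have hlim : ∀ x, Filter.Tendsto (fun n => ENNReal.ofReal (D (fun i => H (v n) i x)))
      Filter.atTop (nhds (ENNReal.ofReal (D (fun i => H w i x)))) := by
    intro x
    refine (ENNReal.continuous_ofReal.tendsto _).comp ((continuous_D.tendsto _).comp ?_)
    refine tendsto_pi_nhds.2 fun i => ?_
    have hq : Filter.Tendsto (fun n => q (v n) i x) Filter.atTop (nhds (q w i x)) := by
      unfold q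
      exact (tendsto_finsetSum _ fun l _ => (hlimv i l).mul_const _).const_add 1
    have hp : ∀ j, Filter.Tendsto (fun n => pr (v n) i x j) Filter.atTop (nhds (pr w i x j)) := by
      intro j
      exact ((hlimv i j).mul_const _).div hq (q_pos hw i x).ne'
    refine tendsto_pi_nhds.2 fun a => tendsto_pi_nhds.2 fun b => ?_
    simp only [H, Matrix.of_apply]
    split_ifs
    · exact (hp a).sub ((hp a).mul (hp b))
    · exact ((hp a).mul (hp b)).const_sub 0
  have hmeas : ∀ n, Measurable fun x => ENNReal.ofReal (D (fun i => H (v n) i x)) := by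
    intro n
    refine ENNReal.measurable_ofReal.comp (Continuous.measurable (continuous_D.comp ?_))
    exact continuous_pi fun i => continuous_H (hv n) i
  have hfatou := lintegral_liminf_le (μ := volume) (u := Filter.atTop) hmeas
  have e1 : ∀ x, Filter.liminf (fun n => ENNReal.ofReal (D (fun i => H (v n) i x))) Filter.atTop =
      ENNReal.ofReal (D (fun i => H w i x)) := fun x => (hlim x).liminf_eq
  simp only [e1] at hfatou
  rw [← J_lintegral hw] at hfatou
  simp only [← J_lintegral (hv _), hJ, Filter.liminf_const] at hfatou
  exact (ENNReal.ofReal_le_ofReal_iff (J_nonneg hw')).1 hfatou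

lemma J_perm (σ : Equiv.Perm ι) : 1 ≤ J (fun i j => if j = σ i then 1 else 0) := by
  set w : ι → ι → ℝ := fun i j => if j = σ i then 1 else 0 with hwdef
  have hw : ∀ i j, 0 ≤ w i j := by
    intro i j; simp only [hwdef]; split_ifs <;> norm_num
  have hH : ∀ x i r c, r ≠ σ i → H w i x r c = 0 := by
    intro x i r c hr
    simp [H, pr, hwdef, hr]
  have hD : ∀ x, D (fun i => H w i x) = (∑ i ∈ Finset.univ, (1 : ℝ) • H w i x).det := by
    intro x
    have e : (∑ i ∈ Finset.univ, (1 : ℝ) • H w i x) =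
        Matrix.of fun r c => H w (σ.symm r) x r c := by
      ext r c
      simp only [one_smul, Matrix.sum_apply, Matrix.of_apply]
      refine Finset.sum_eq_single _ (fun i _ hi => hH x i r c ?_) (by simp)
      rintro rfl
      simp at hi
    rw [e]
    unfold D
    refine Finset.sum_eq_single σ.symm (fun τ _ hτ => ?_) (by simp)
    have : ∃ r, τ r ≠ σ.symm r := by
      by_contra hcon
      push Not at hcon
      exact hτ (Equiv.ext hcon)
    obtain ⟨r, hr⟩ := this
    refine Matrix.det_eq_zero_of_row_eq_zero r fun c => hH x _ r c ?_
    intro h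
    exact hr (by rw [h, Equiv.symm_apply_apply, ← h])
  unfold J
  simp only [hD]
  rw [← volume_A_toReal hw (c := fun _ => 1) (fun _ => one_pos)]
  have hcube : Set.Icc (0 : ι → ℝ) 1 ⊆ A w (fun _ => 1) Finset.univ := by
    intro x hx
    rw [mem_A]
    refine ⟨fun i => Pi.single (σ i) (x (σ i)), fun i _ => ?_, ?_⟩
    · have h1 : (Pi.single (σ i) 1 : ι → ℝ) ∈ body {j | 0 < w i j} :=
        subset_convexHull _ _ (Set.mem_insert_of_mem _ ⟨σ i, by simp [hwdef], rfl⟩)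
      have := (body_convex {j | 0 < w i j}).smul_mem_of_zero_mem (zero_mem_body _) h1
        (t := x (σ i)) ⟨hx.1 _, hx.2 _⟩
      rwa [← Pi.single_smul, smul_eq_mul, mul_one] at this
    · simp only [one_smul]
      rw [Equiv.sum_comp σ (fun j => (Pi.single j (x j) : ι → ℝ))]
      exact Finset.univ_sum_single x
  have hv : volume (Set.Icc (0 : ι → ℝ) 1) = 1 := by
    rw [Real.volume_Icc_pi]; simp
  have := ENNReal.toReal_mono (volume_A_lt_top w (fun _ => 1) Finset.univ).ne (measure_mono hcube)
  rw [hv] at this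
  simpa using this

lemma volume_corner : 2 ^ Fintype.card ι * volume {x : ι → ℝ | (∀ j, 0 < x j) ∧ ∑ j, x j ≤ 1} ≤
    ENNReal.ofReal (2 ^ Fintype.card ι / (Fintype.card ι).factorial) := by
  set T : Set (ι → ℝ) := {x : ι → ℝ | (∀ j, 0 < x j) ∧ ∑ j, x j ≤ 1} with hT
  have hTm : MeasurableSet T := by
    have : T = (⋂ j, {x : ι → ℝ | 0 < x j}) ∩ {x | ∑ j, x j ≤ 1} := by
      ext x; simp [hT]
    rw [this]
    refine MeasurableSet.inter (MeasurableSet.iInter fun j => ?_) ?_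
    · exact measurableSet_lt measurable_const (measurable_pi_apply j)
    · exact measurableSet_le (Finset.measurable_sum _ fun j _ => measurable_pi_apply j)
        measurable_const
  let R : (ι → Bool) → (ι → ℝ) → ι → ℝ := fun s x j => (if s j then -(x j) else x j)
  have hR : ∀ s, MeasurePreserving (R s) volume volume := by
    intro s
    refine volume_preserving_pi (f := fun j y => if s j then -y else y) fun j => ?_
    cases s j
    · simpa using! MeasurePreserving.id (volume : Measure ℝ)
    · simpa using Measure.measurePreserving_neg (volume : Measure ℝ)
  have hdisj : Pairwise (Function.onFun Disjoint fun s => R s ⁻¹' T) := by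
    intro s t hst
    rw [Function.onFun, Set.disjoint_left]
    rintro x ⟨hs, -⟩ ⟨ht, -⟩
    apply hst
    funext j
    have h1 := hs j
    have h2 := ht j
    simp only [R] at h1 h2
    cases hsj : s j <;> cases htj : t j <;> simp [hsj, htj] at h1 h2 ⊢ <;> linarith
  have hsub : (⋃ s, R s ⁻¹' T) ⊆ {x | (∑ j, |x j| ^ (1 : ℝ)) ^ (1 / (1 : ℝ)) ≤ 1} := by
    intro x hx
    obtain ⟨s, hs, hs2⟩ := Set.mem_iUnion.1 hx
    have e : ∀ j, |x j| = R s x j := by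
      intro j
      have := hs j
      simp only [R] at this ⊢
      split_ifs at this ⊢
      · exact abs_of_neg (by linarith)
      · exact abs_of_pos this
    simp only [Real.rpow_one, div_one, Set.mem_ofPred_eq, e]
    exact hs2
  have h1 : volume (⋃ s, R s ⁻¹' T) = 2 ^ Fintype.card ι * volume T := by
    rw [measure_iUnion hdisj fun s => (hR s).measurable hTm, tsum_fintype]
    simp only [(hR _).measure_preimage hTm.nullMeasurableSet]
    simp
  rw [← h1]
  refine (measure_mono hsub).trans (le_of_eq ?_)
  rcases isEmpty_or_nonempty ι with hE | hE
  · simp [Measure.volume_pi_eq_dirac isEmptyElim]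
  · rw [volume_sum_rpow_le ι le_rfl 1]
    have := Real.Gamma_nat_eq_factorial (Fintype.card ι)
    norm_num [this]

lemma J_one_le [Nonempty ι] : J (fun _ _ => 1 : ι → ι → ℝ) ≤ 1 := by
  set w : ι → ι → ℝ := fun _ _ => 1 with hwdef
  have hw : ∀ i j, 0 ≤ w i j := fun _ _ => zero_le_one
  obtain ⟨i₀⟩ := ‹Nonempty ι›
  have hD : ∀ x, D (fun i => H w i x) =
      (Fintype.card ι).factorial * (∑ i ∈ {i₀}, (1 : ℝ) • H w i x).det := by
    intro x
    have : (fun i => H w i x) = fun _ => H w i₀ x := rfl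
    rw [this, D_const]
    simp
  unfold J
  simp only [hD]
  rw [integral_const_mul, ← volume_A_toReal hw (c := fun _ => 1) (fun _ => one_pos)]
  set T : Set (ι → ℝ) := {x : ι → ℝ | (∀ j, 0 < x j) ∧ ∑ j, x j ≤ 1} with hT
  have hA : A w (fun _ => 1) {i₀} ⊆ {x | (∀ j, 0 ≤ x j) ∧ ∑ j, x j ≤ 1} := by
    unfold A
    simp only [Finset.sum_singleton, one_smul]
    refine convexHull_min ?_ ?_
    · rintro _ (rfl | ⟨l, hl, rfl⟩)
      · simp
      · refine ⟨fun j => ?_, ?_⟩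
        · by_cases h : j = l
          · subst h; simp
          · simp [h]
        · simp
    · rintro x ⟨hx, hx'⟩ y ⟨hy, hy'⟩ a b ha hb hab
      refine ⟨fun j => ?_, ?_⟩
      · exact add_nonneg (mul_nonneg ha (hx j)) (mul_nonneg hb (hy j))
      · simp only [Pi.add_apply, Pi.smul_apply, smul_eq_mul, Finset.sum_add_distrib,
          ← Finset.mul_sum]
        nlinarith
  have hintT : interior (A w (fun _ => 1) {i₀}) ⊆ T := by
    intro x hx
    refine ⟨fun j => ?_, (hA (interior_subset hx)).2⟩
    obtain ⟨δ, hδ, hball⟩ := Metric.nhds_basis_closedBall.mem_iff.1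
      (mem_interior_iff_mem_nhds.1 hx)
    have hmem : x + Pi.single j (-δ) ∈ A w (fun _ => 1) {i₀} := by
      apply hball
      rw [Metric.mem_closedBall, dist_eq_norm, add_sub_cancel_left, Pi.norm_single, norm_neg,
        Real.norm_eq_abs, abs_of_pos hδ]
    have := (hA hmem).1 j
    simp at this
    linarith
  have hvol : volume (A w (fun _ => 1) {i₀}) ≤ volume T := by
    rw [← measure_congr (interior_ae_eq_of_null_frontier
          ((A_convex w (fun _ => 1) {i₀}).addHaar_frontier volume))]
    exact measure_mono hintT
  have h3 : 2 ^ Fintype.card ι * volume (A w (fun _ => 1) {i₀}) ≤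
      ENNReal.ofReal (2 ^ Fintype.card ι / (Fintype.card ι).factorial) :=
    (mul_le_mul_right hvol _).trans volume_corner
  have h4 := ENNReal.toReal_mono ENNReal.ofReal_ne_top h3
  rw [ENNReal.toReal_mul, ENNReal.toReal_ofReal (by positivity), ENNReal.toReal_pow] at h4
  have hf : (0 : ℝ) < (Fintype.card ι).factorial := by positivity
  rw [le_div_iff₀ hf] at h4
  have h2 : (0 : ℝ) < 2 ^ Fintype.card ι := by positivity
  have e2 : ENNReal.toReal 2 = 2 := rfl
  rw [e2] at h4
  have h5 : 2 ^ Fintype.card ι * ((volume (A w (fun _ => 1) {i₀})).toReal *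
    (Fintype.card ι).factorial) ≤ 2 ^ Fintype.card ι * 1 := by linarith
  have := le_of_mul_le_mul_left h5 h2
  linarith

/-- Mixed volume of scaled corner simplices admitting a perfect matching. -/
theorem mv_matching [Nonempty ι] {w : ι → ι → ℝ} (hw : ∀ i j, 0 ≤ w i j) {c : ι → ℝ}
    (hc : ∀ i, 0 < c i) (σ : Equiv.Perm ι) (hσ : ∀ i, 0 < w i (σ i)) : mv w c = ∏ i, c i := by
  have h1 : J w ≤ 1 := (J_mono hw (fun _ _ => zero_le_one) fun _ _ _ => one_pos).trans J_one_le
  have h2 : 1 ≤ J w := by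
    refine (J_perm σ).trans (J_mono ?_ hw ?_)
    · intro i j; split_ifs <;> norm_num
    · intro i j h
      by_cases hj : j = σ i
      · rw [hj]; exact hσ i
      · simp [hj] at h
  rw [mv_eq hw hc, le_antisymm h1 h2, mul_one]

end LamanMV


open scoped Classical

/-- Index of the variable `xᵢ` in the coordinate order `(x₁,y₁,…,x_n,y_n)`. -/
def xIdx {n : ℕ} (u : Fin n) : Fin (2 * n) := ⟨2 * (u : ℕ), by have := u.isLt; omega⟩

/-- Index of the variable `yᵢ` in the coordinate order `(x₁,y₁,…,x_n,y_n)`. -/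
def yIdx {n : ℕ} (u : Fin n) : Fin (2 * n) := ⟨2 * (u : ℕ) + 1, by have := u.isLt; omega⟩

/-- The Newton polytope of the edge equation
`(xᵤ−x_v)² + (yᵤ−y_v)² − l² = 0`: the convex hull of the exponent vectors of
the monomials `xᵤ², xᵤx_v, x_v², yᵤ², yᵤy_v, y_v², 1`. -/
def edgeNP {n : ℕ} (e : Sym2 (Fin n)) : Set (Fin (2 * n) → ℝ) :=
  convexHull ℝ {p | ∃ u v : Fin n, e = s(u, v) ∧
    (p = 0 ∨
     p = 2 • (Pi.single (xIdx u) 1 : Fin (2 * n) → ℝ) ∨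
     p = (Pi.single (xIdx u) 1 : Fin (2 * n) → ℝ) + Pi.single (xIdx v) 1 ∨
     p = 2 • (Pi.single (xIdx v) 1 : Fin (2 * n) → ℝ) ∨
     p = 2 • (Pi.single (yIdx u) 1 : Fin (2 * n) → ℝ) ∨
     p = (Pi.single (yIdx u) 1 : Fin (2 * n) → ℝ) + Pi.single (yIdx v) 1 ∨
     p = 2 • (Pi.single (yIdx v) 1 : Fin (2 * n) → ℝ))}

/-- The Laman property for a simple graph on `n` vertices: it has `2n − 3`
edges and every subset of `k ≥ 2` vertices spans at most `2k − 3` edges. -/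
def LamanGraph {n : ℕ} (G : SimpleGraph (Fin n)) : Prop :=
  G.edgeFinset.card = 2 * n - 3 ∧
  ∀ S : Finset (Fin n), 2 ≤ S.card →
    (G.edgeFinset.filter fun e => ∀ v ∈ e, v ∈ S).card ≤ 2 * S.card - 3


namespace LamanMV

/-- vertex to which a coordinate belongs -/
def vtx {n : ℕ} (j : Fin (2 * n)) : Fin n := ⟨(j : ℕ) / 2, by have := j.isLt; omega⟩

lemma vtx_x {n : ℕ} (u : Fin n) : vtx (xIdx u) = u := by
  ext; simp [vtx, xIdx]

lemma vtx_y {n : ℕ} (u : Fin n) : vtx (yIdx u) = u := by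
  ext; simp [vtx, yIdx]; omega

lemma eq_x_or_y {n : ℕ} (j : Fin (2 * n)) : j = xIdx (vtx j) ∨ j = yIdx (vtx j) := by
  rcases Nat.mod_two_eq_zero_or_one (j : ℕ) with h | h
  · left; ext; simp [vtx, xIdx]; omega
  · right; ext; simp [vtx, yIdx]; omega

lemma edgeNP_eq {n : ℕ} (e : Sym2 (Fin n)) :
    edgeNP e = (2 : ℝ) • body {j : Fin (2 * n) | vtx j ∈ e} := by
  have two : ∀ p : Fin (2 * n) → ℝ, 2 • p = (2 : ℝ) • p := fun p => by
    rw [two_smul, two_smul]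
  apply Set.Subset.antisymm
  · refine convexHull_min ?_ ((body_convex _).smul 2)
    rintro p ⟨u, v, rfl, hp⟩
    have hmem : ∀ j : Fin (2 * n), vtx j ∈ s(u, v) →
        (Pi.single j 1 : Fin (2 * n) → ℝ) ∈ body {j : Fin (2 * n) | vtx j ∈ s(u, v)} :=
      fun j hj => subset_convexHull _ _ (Set.mem_insert_of_mem _ ⟨j, hj, rfl⟩)
    have hsum : ∀ i j : Fin (2 * n), vtx i ∈ s(u, v) → vtx j ∈ s(u, v) →
        (Pi.single i 1 : Fin (2 * n) → ℝ) + Pi.single j 1 ∈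
          (2 : ℝ) • body {j : Fin (2 * n) | vtx j ∈ s(u, v)} := by
      intro i j hi hj
      refine ⟨(1 / 2 : ℝ) • (Pi.single i 1 : Fin (2 * n) → ℝ) + (1 / 2 : ℝ) • Pi.single j 1,
        body_convex _ (hmem i hi) (hmem j hj) (by norm_num) (by norm_num) (by norm_num), ?_⟩
      simp only [smul_add, smul_smul]
      norm_num
    have hdbl : ∀ i : Fin (2 * n), vtx i ∈ s(u, v) → 2 • (Pi.single i 1 : Fin (2 * n) → ℝ) ∈
        (2 : ℝ) • body {j : Fin (2 * n) | vtx j ∈ s(u, v)} := by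
      intro i hi
      rw [two_smul]
      exact hsum i i hi hi
    have hxu : vtx (xIdx u) ∈ s(u, v) := by rw [vtx_x]; exact Sym2.mem_mk_left _ _
    have hxv : vtx (xIdx v) ∈ s(u, v) := by rw [vtx_x]; exact Sym2.mem_mk_right _ _
    have hyu : vtx (yIdx u) ∈ s(u, v) := by rw [vtx_y]; exact Sym2.mem_mk_left _ _
    have hyv : vtx (yIdx v) ∈ s(u, v) := by rw [vtx_y]; exact Sym2.mem_mk_right _ _
    rcases hp with rfl | rfl | rfl | rfl | rfl | rfl | rfl
    · exact ⟨0, zero_mem_body _, smul_zero _⟩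
    · exact hdbl _ hxu
    · exact hsum _ _ hxu hxv
    · exact hdbl _ hxv
    · exact hdbl _ hyu
    · exact hsum _ _ hyu hyv
    · exact hdbl _ hyv
  · unfold body edgeNP
    rw [← convexHull_smul]
    refine convexHull_mono ?_
    rintro _ ⟨p, (rfl | ⟨j, hj, rfl⟩), rfl⟩
    · induction e using Sym2.ind with
      | _ u v => exact ⟨u, v, rfl, Or.inl (smul_zero _)⟩
    · obtain ⟨v, hv⟩ := Sym2.mem_iff_exists.1 hj
      refine ⟨vtx j, v, hv, ?_⟩
      rcases eq_x_or_y j with h | h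
      · right; left
        rw [two, ← h]
      · right; right; right; right; left
        rw [two, ← h]

lemma exists_edge_matching {n : ℕ} (hn : 3 ≤ n)
    (G : SimpleGraph (Fin n)) (hLaman : LamanGraph G) (a b : Fin n)
    (ha : (a : ℕ) = 0) (hb : (b : ℕ) = 1) (h01 : G.Adj a b)
    (En : Fin (2 * n - 4) → Sym2 (Fin n)) (hinj : Function.Injective En)
    (hrange : ∀ e, e ∈ Set.range En ↔
      e ∈ G.edgeSet ∧ e ≠ s(a, b)) :
    ∃ f : Fin (2 * n - 4) → Fin (2 * n), Function.Injective f ∧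
      ∀ k, 4 ≤ (f k : ℕ) ∧ vtx (f k) ∈ En k := by
  let t : Fin (2 * n - 4) → Finset (Fin (2 * n)) := fun k =>
    Finset.univ.filter fun j => 4 ≤ (j : ℕ) ∧ vtx j ∈ En k
  have hall : ∀ s : Finset (Fin (2 * n - 4)), s.card ≤ (s.biUnion t).card := by
    intro s
    have hab : a ≠ b := fun h => by
      rw [h, hb] at ha
      omega
    let W : Finset (Fin n) := Finset.univ.filter fun v => (∃ k ∈ s, v ∈ En k) ∧ v ≠ a ∧ v ≠ b
    let S : Finset (Fin n) := insert a (insert b W)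
    have haW : a ∉ insert b W := by simp [W, hab]
    have hbW : b ∉ W := by simp [W]
    have hScard : S.card = W.card + 2 := by
      rw [Finset.card_insert_of_notMem haW, Finset.card_insert_of_notMem hbW]
    have hL := hLaman.2 S (by omega)
    have h1 : s.card + 1 ≤ (G.edgeFinset.filter fun e => ∀ v ∈ e, v ∈ S).card := by
      have hnot : s(a, b) ∉ s.image En := by
        intro h
        obtain ⟨k, -, hk⟩ := Finset.mem_image.1 h
        exact ((hrange (En k)).1 ⟨k, rfl⟩).2 hk
      have hc : (insert s(a, b) (s.image En)).card = s.card + 1 := by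
        rw [Finset.card_insert_of_notMem hnot, Finset.card_image_of_injective _ hinj]
      rw [← hc]
      refine Finset.card_le_card ?_
      intro e he
      rw [Finset.mem_filter, SimpleGraph.mem_edgeFinset]
      rcases Finset.mem_insert.1 he with rfl | he
      · refine ⟨h01, fun v hv => ?_⟩
        rcases Sym2.mem_iff.1 hv with rfl | rfl
        · simp [S]
        · simp [S]
      · obtain ⟨k, hk, rfl⟩ := Finset.mem_image.1 he
        refine ⟨((hrange (En k)).1 ⟨k, rfl⟩).1, fun v hv => ?_⟩
        by_cases hva : v = a
        · simp [S, hva]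
        by_cases hvb : v = b
        · simp [S, hvb]
        simp only [S, W, Finset.mem_insert, Finset.mem_filter, Finset.mem_univ, true_and]
        exact Or.inr (Or.inr ⟨⟨k, hk, hv⟩, hva, hvb⟩)
    have h2 : 2 * W.card ≤ (s.biUnion t).card := by
      have hx : Function.Injective (xIdx : Fin n → Fin (2 * n)) :=
        Function.LeftInverse.injective vtx_x
      have hy : Function.Injective (yIdx : Fin n → Fin (2 * n)) :=
        Function.LeftInverse.injective vtx_y
      have hd : Disjoint (W.image xIdx) (W.image yIdx) := by
        rw [Finset.disjoint_left]
        intro j h1 h2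
        obtain ⟨u, -, rfl⟩ := Finset.mem_image.1 h1
        obtain ⟨v, -, h⟩ := Finset.mem_image.1 h2
        have := congrArg Fin.val h
        simp only [xIdx, yIdx] at this
        omega
      have hc : (W.image xIdx ∪ W.image yIdx).card = 2 * W.card := by
        rw [Finset.card_union_of_disjoint hd, Finset.card_image_of_injective _ hx,
          Finset.card_image_of_injective _ hy]
        ring
      rw [← hc]
      refine Finset.card_le_card ?_
      have hW : ∀ u ∈ W, (∃ k ∈ s, u ∈ En k) ∧ 2 ≤ (u : ℕ) := by
        intro u hu
        obtain ⟨h1, h2, h3⟩ := (Finset.mem_filter.1 hu).2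
        refine ⟨h1, ?_⟩
        have h2' : (u : ℕ) ≠ 0 := fun h => h2 (Fin.ext (h.trans ha.symm))
        have h3' : (u : ℕ) ≠ 1 := fun h => h3 (Fin.ext (h.trans hb.symm))
        omega
      intro j hj
      rcases Finset.mem_union.1 hj with hj | hj
      · obtain ⟨u, hu, rfl⟩ := Finset.mem_image.1 hj
        obtain ⟨⟨k, hk, huk⟩, h2⟩ := hW u hu
        refine Finset.mem_biUnion.2 ⟨k, hk, Finset.mem_filter.2 ⟨Finset.mem_univ _, ?_, ?_⟩⟩
        · simp only [xIdx]; omega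
        · rwa [vtx_x]
      · obtain ⟨u, hu, rfl⟩ := Finset.mem_image.1 hj
        obtain ⟨⟨k, hk, huk⟩, h2⟩ := hW u hu
        refine Finset.mem_biUnion.2 ⟨k, hk, Finset.mem_filter.2 ⟨Finset.mem_univ _, ?_, ?_⟩⟩
        · simp only [yIdx]; omega
        · rwa [vtx_y]
    omega
  obtain ⟨f, hf, hft⟩ := (Finset.all_card_le_biUnion_card_iff_exists_injective t).1 hall
  exact ⟨f, hf, fun k => (Finset.mem_filter.1 (hft k)).2⟩

end LamanMV

/-- Theorem: General bound: for any Laman graph on `n` vertices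
(with `[v₁,v₂] ∈ E`), the mixed volume of the Newton polytopes of the `2n`
polynomials of the system `{x₁−c₁, y₁−c₂, x₂−(l₁₂−c₁), y₂−c₃}` together with
`{(xᵢ−xⱼ)² + (yᵢ−yⱼ)² − l²ᵢⱼ : [vᵢ,vⱼ] ∈ E ∖ {[v₁,v₂]}}` is exactly `4^{n−2}`.
The edges of `E ∖ {[v₁,v₂]}` are enumerated by `En`. -/
theorem laman_mixedVolume_initial_system {n : ℕ} (hn : 3 ≤ n)
    (G : SimpleGraph (Fin n)) (hLaman : LamanGraph G)
    (h01 : G.Adj ⟨0, by omega⟩ ⟨1, by omega⟩)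
    (En : Fin (2 * n - 4) → Sym2 (Fin n)) (hinj : Function.Injective En)
    (hrange : ∀ e, e ∈ Set.range En ↔
      e ∈ G.edgeSet ∧ e ≠ s(⟨0, by omega⟩, ⟨1, by omega⟩))
    (NP : Fin (2 * n) → Set (Fin (2 * n) → ℝ))
    (hNP : ∀ i : Fin (2 * n), NP i =
      if h : (i : ℕ) < 4 then
        segment ℝ 0 (Pi.single (⟨(i : ℕ), by have := i.isLt; omega⟩ : Fin (2 * n)) 1)
      else
        edgeNP (En ⟨(i : ℕ) - 4, by have := i.isLt; omega⟩)) :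
    mixedVolume NP = (4 : ℝ) ^ (n - 2) := by
  classical
  obtain ⟨f, hf, hft⟩ := LamanMV.exists_edge_matching hn G hLaman _ _ rfl rfl h01 En hinj hrange
  let I : Fin (2 * n) → Set (Fin (2 * n)) := fun i =>
    if h : (i : ℕ) < 4 then {i} else
      {j | LamanMV.vtx j ∈ En ⟨(i : ℕ) - 4, by have := i.isLt; omega⟩}
  let w : Fin (2 * n) → Fin (2 * n) → ℝ := fun i j => if j ∈ I i then 1 else 0
  let c : Fin (2 * n) → ℝ := fun i => if (i : ℕ) < 4 then 1 else 2
  have hw : ∀ i j, 0 ≤ w i j := by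
    intro i j; simp only [w]; split_ifs <;> norm_num
  have hwI : ∀ i, {j | 0 < w i j} = I i := by
    intro i
    ext j
    by_cases h : j ∈ I i <;> simp [w, h]
  have hc : ∀ i, 0 < c i := by
    intro i; simp only [c]; split_ifs <;> norm_num
  have hbody : ∀ i, NP i = c i • LamanMV.body {j | 0 < w i j} := by
    intro i
    rw [hwI, hNP]
    by_cases h : (i : ℕ) < 4
    · simp only [h, dif_pos, I, c, if_true, one_smul, LamanMV.body]
      rw [Set.image_singleton, convexHull_pair]
    · simp only [h, I, c, dif_neg, if_false, not_false_eq_true]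
      exact LamanMV.edgeNP_eq _
  let g : Fin (2 * n) → Fin (2 * n) := fun i =>
    if h : (i : ℕ) < 4 then i else f ⟨(i : ℕ) - 4, by have := i.isLt; omega⟩
  have hg : Function.Injective g := by
    intro i i' h
    simp only [g] at h
    by_cases h1 : (i : ℕ) < 4 <;> by_cases h2 : (i' : ℕ) < 4
    · simpa [h1, h2] using h
    · simp only [h1, h2, dif_pos, dif_neg, not_false_eq_true] at h
      have := (hft ⟨(i' : ℕ) - 4, by have := i'.isLt; omega⟩).1
      rw [← h] at this
      omega
    · simp only [h1, h2, dif_pos, dif_neg, not_false_eq_true] at h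
      have := (hft ⟨(i : ℕ) - 4, by have := i.isLt; omega⟩).1
      rw [h] at this
      omega
    · simp only [h1, h2, dif_neg, not_false_eq_true] at h
      have := congrArg Fin.val (hf h)
      simp only at this
      ext
      omega
  let σ : Equiv.Perm (Fin (2 * n)) :=
    Equiv.ofBijective g (Finite.injective_iff_bijective.1 hg)
  have hσ : ∀ i, 0 < w i (σ i) := by
    intro i
    have : g i ∈ I i := by
      by_cases h : (i : ℕ) < 4
      · simp [g, I, h]
      · simp only [g, I, h, dif_neg, not_false_eq_true]
        exact (hft _).2
    show 0 < w i (g i)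
    simp [w, this]
  have : Nonempty (Fin (2 * n)) := ⟨⟨0, by omega⟩⟩
  have hmain := LamanMV.mv_matching hw hc σ hσ
  have hprod : ∏ i, c i = (4 : ℝ) ^ (n - 2) := by
    have e : 2 * n = 4 + 2 * (n - 2) := by omega
    have h1 : ∏ i, c i = ∏ i ∈ Finset.range (2 * n), (if i < 4 then (1 : ℝ) else 2) :=
      Fin.prod_univ_eq_prod_range (fun i => if i < 4 then (1 : ℝ) else 2) (2 * n)
    rw [h1, e, Finset.prod_range_add]
    have h2 : ∏ x ∈ Finset.range 4, (if x < 4 then (1 : ℝ) else 2) = 1 :=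
      Finset.prod_eq_one fun x hx => by simp [Finset.mem_range.1 hx]
    rw [h2, one_mul]
    simp [pow_mul]
    norm_num
  rw [← hprod, ← hmain]
  have hNPf : NP = fun i => c i • LamanMV.body {j | 0 < w i j} := funext hbody
  unfold mixedVolume LamanMV.mv LamanMV.A
  rw [hNPf, Finset.powerset_univ, Fintype.card_fin]
  refine Finset.sum_subset (Finset.subset_univ _) fun S _ hS => ?_
  have hS' : S = ∅ := by
    rw [← Finset.not_nonempty_iff_eq_empty]
    intro h
    exact hS (Finset.mem_filter.2 ⟨Finset.mem_univ _, h⟩)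
  subst hS'
  have hz : volume ((0 : Set (Fin (2 * n) → ℝ))) = 0 := by
    rw [← Set.singleton_zero]
    exact measure_singleton 0
  rw [Finset.sum_empty, hz]
  simp
end

section
/- Each Henneberg I step exactly doubles the count given by the separated mixed volume: if a new vertex v_{n+1} is connected to vertices v_r, v_q and the substituted system gains the equations s_{n+1} − x_{n+1}² − y_{n+1}² = 0, s_r + s_{n+1} − 2x_r x_{n+1} − 2y_r y_{n+1} − l² = 0, s_q + s_{n+1} − 2x_q x_{n+1} − 2y_q y_{n+1} − l'² = 0, then the mixed volume of the projections of these three Newton polytopes to the coordinates (x_{n+1}, y_{n+1}, s_{n+1}) equals 2. Concretely, MV_3(conv{2ξ_1, 2ξ_2, ξ_3}, conv{0, ξ_1, ξ_2, ξ_3}, conv{0, ξ_1, ξ_2, ξ_3}) = 2. -/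
open MeasureTheory Pointwise

/-- The solid simplex of size `t`. -/
def solidSimplex (n : ℕ) (t : ℝ) : Set (Fin n → ℝ) := {x | (∀ i, 0 ≤ x i) ∧ ∑ i, x i ≤ t}

lemma solidSimplex_closed (n : ℕ) (t : ℝ) : IsClosed (solidSimplex n t) := by
  have : solidSimplex n t = (⋂ i, {x : Fin n → ℝ | 0 ≤ x i}) ∩ {x | ∑ i, x i ≤ t} := by
    ext x; simp [solidSimplex]
  rw [this]
  refine IsClosed.inter (isClosed_iInter fun i => ?_) ?_
  · exact isClosed_le continuous_const (continuous_apply i)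
  · exact isClosed_le (by fun_prop) continuous_const

lemma solidSimplex_volume (n : ℕ) : ∀ t : ℝ, 0 ≤ t →
    volume (solidSimplex n t) = ENNReal.ofReal (t ^ n / n.factorial) := by
  induction n with
  | zero =>
    intro t ht
    have : solidSimplex 0 t = Set.univ := by ext x; simp [solidSimplex, ht]
    rw [this]; simp [volume_pi]
  | succ n ih =>
    intro t ht
    have hmp := (volume_preserving_piFinSuccAbove (fun _ : Fin (n+1) => ℝ) 0).symm
    rw [← hmp.measure_preimage (solidSimplex_closed _ _).measurableSet.nullMeasurableSet,
      Measure.volume_eq_prod, Measure.prod_apply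
        (hmp.measurable (solidSimplex_closed _ _).measurableSet)]
    have hs : ∀ x : ℝ, volume (Prod.mk x ⁻¹' ((MeasurableEquiv.piFinSuccAbove
        (fun _ : Fin (n+1) => ℝ) 0).symm ⁻¹' solidSimplex (n+1) t)) =
        (Set.Icc 0 t).indicator (fun x => ENNReal.ofReal ((t - x) ^ n / n.factorial)) x := by
      intro x
      by_cases hx : x ∈ Set.Icc 0 t
      · rw [Set.indicator_of_mem hx, ← ih (t - x) (by linarith [hx.2])]
        congr 1
        ext y
        simp only [solidSimplex, Set.mem_preimage, Set.mem_ofPred_eq, Fin.forall_fin_succ,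
          Fin.sum_univ_succ]
        simp [MeasurableEquiv.piFinSuccAbove, hx.1, le_sub_iff_add_le']
      · rw [Set.indicator_of_notMem hx]
        convert measure_empty (μ := (volume : Measure (Fin n → ℝ)))
        ext y
        simp only [solidSimplex, Set.mem_preimage, Set.mem_ofPred_eq, Fin.forall_fin_succ,
          Fin.sum_univ_succ]
        simp only [MeasurableEquiv.piFinSuccAbove, Set.mem_empty_iff_false, iff_false]
        simp
        intro h0 hy
        by_contra! h
        exact hx ⟨h0, by linarith [Finset.sum_nonneg (fun i (_ : i ∈ Finset.univ) => hy i)]⟩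
    simp_rw [hs]
    rw [lintegral_indicator measurableSet_Icc, ← ofReal_integral_eq_lintegral_ofReal]
    · congr 1
      rw [integral_Icc_eq_integral_Ioc, ← intervalIntegral.integral_of_le ht]
      rw [intervalIntegral.integral_comp_sub_left (fun x => x ^ n / (n.factorial : ℝ)) t]
      simp [Nat.factorial_succ]
      field_simp
    · exact (by fun_prop : Continuous fun x : ℝ => (t - x) ^ n / (n.factorial : ℝ)).integrableOn_Icc
    · refine (ae_restrict_iff' measurableSet_Icc).2 (Filter.Eventually.of_forall fun x hx => ?_)
      have : 0 ≤ t - x := by linarith [hx.2]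
      positivity

lemma convB : convexHull ℝ ({![0,0,0], ![1,0,0], ![0,1,0], ![0,0,1]} : Set (Fin 3 → ℝ)) =
    solidSimplex 3 1 := by
  apply Set.Subset.antisymm
  · refine convexHull_min ?_ ?_
    · rintro x (rfl | rfl | rfl | rfl) <;>
        simp [solidSimplex, Fin.forall_fin_succ, Fin.sum_univ_succ]
    · rintro x ⟨hx, hx'⟩ y ⟨hy, hy'⟩ a b ha hb hab
      refine ⟨fun i => ?_, ?_⟩
      · have := hx i
        have := hy i
        simp only [Pi.add_apply, Pi.smul_apply, smul_eq_mul]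
        positivity
      · simp only [Pi.add_apply, Pi.smul_apply, smul_eq_mul, Finset.sum_add_distrib,
          ← Finset.mul_sum]
        nlinarith
  · rintro x ⟨hx, hx'⟩
    rw [Fin.sum_univ_three] at hx'
    have := (convex_convexHull ℝ
      ({![0,0,0], ![1,0,0], ![0,1,0], ![0,0,1]} : Set (Fin 3 → ℝ))).sum_mem
      (t := Finset.univ) (w := ![1 - x 0 - x 1 - x 2, x 0, x 1, x 2])
      (z := ![![0,0,0], ![1,0,0], ![0,1,0], ![0,0,1]])
      (by intro i _; fin_cases i <;> simp [hx]; linarith)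
      (by simp [Fin.sum_univ_succ]; ring)
      (by intro i _; apply subset_convexHull; fin_cases i <;> simp)
    convert this using 1
    ext i
    fin_cases i <;> simp [Fin.sum_univ_succ]

/-- The triangle. -/
def triA : Set (Fin 3 → ℝ) := {x | (∀ i, 0 ≤ x i) ∧ x 0 + x 1 + 2 * x 2 = 2}

lemma convA : convexHull ℝ ({![2,0,0], ![0,2,0], ![0,0,1]} : Set (Fin 3 → ℝ)) = triA := by
  apply Set.Subset.antisymm
  · refine convexHull_min ?_ ?_
    · rintro x (rfl | rfl | rfl) <;>
        simp [triA, Fin.forall_fin_succ]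
    · rintro x ⟨hx, hx'⟩ y ⟨hy, hy'⟩ a b ha hb hab
      refine ⟨fun i => ?_, ?_⟩
      · have := hx i
        have := hy i
        simp only [Pi.add_apply, Pi.smul_apply, smul_eq_mul]
        positivity
      · simp only [Pi.add_apply, Pi.smul_apply, smul_eq_mul]
        linear_combination a * hx' + b * hy' + 2 * hab
  · rintro x ⟨hx, hx'⟩
    have := (convex_convexHull ℝ
      ({![2,0,0], ![0,2,0], ![0,0,1]} : Set (Fin 3 → ℝ))).sum_mem
      (t := Finset.univ) (w := ![x 0 / 2, x 1 / 2, x 2])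
      (z := ![![2,0,0], ![0,2,0], ![0,0,1]])
      (by intro i _; have := hx 0; have := hx 1; have := hx 2; fin_cases i <;> simp <;> linarith)
      (by simp [Fin.sum_univ_succ]; linarith)
      (by intro i _; apply subset_convexHull; fin_cases i <;> simp)
    convert this using 1
    ext i
    fin_cases i <;> simp [Fin.sum_univ_succ]

lemma BB : solidSimplex 3 1 + solidSimplex 3 1 = solidSimplex 3 2 := by
  ext x
  constructor
  · rintro ⟨a, ⟨ha, ha'⟩, b, ⟨hb, hb'⟩, rfl⟩
    refine ⟨fun i => add_nonneg (ha i) (hb i), ?_⟩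
    simp only [Pi.add_apply, Finset.sum_add_distrib]
    linarith
  · rintro ⟨hx, hx'⟩
    have : (1/2 : ℝ) • x ∈ solidSimplex 3 1 := by
      refine ⟨fun i => ?_, ?_⟩
      · have := hx i
        simp only [Pi.smul_apply, smul_eq_mul]
        positivity
      · simp only [Pi.smul_apply, smul_eq_mul, ← Finset.mul_sum]
        linarith
    refine ⟨_, this, _, this, ?_⟩
    ext i
    simp
    ring

/-- The Minkowski sum of the triangle and the simplex. -/
def regR (l : ℝ) : Set (Fin 3 → ℝ) := {x | (∀ i, 0 ≤ x i) ∧ 2 ≤ x 0 + x 1 + 2 * x 2 ∧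
  x 0 + x 1 + x 2 ≤ 2 + l ∧ x 0 + x 1 + 2 * x 2 ≤ 2 + 2 * l}

lemma sumR (l : ℝ) : triA + solidSimplex 3 l = regR l := by
  ext x
  constructor
  · rintro ⟨a, ⟨ha, ha'⟩, b, ⟨hb, hb'⟩, rfl⟩
    rw [Fin.sum_univ_three] at hb'
    have := ha 0
    have := ha 1
    have := ha 2
    have := hb 0
    have := hb 1
    have := hb 2
    refine ⟨fun i => add_nonneg (ha i) (hb i), ?_, ?_, ?_⟩ <;> simp only [Pi.add_apply] <;> linarith
  · rintro ⟨hx, h1, h2, h3⟩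
    have p0 := hx 0
    have p1 := hx 1
    have p2 := hx 2
    by_cases h : 2 ≤ x 0 + x 1
    · have hu : 0 < x 0 + x 1 := by linarith
      have hle : 2 / (x 0 + x 1) ≤ 1 := (div_le_one hu).2 h
      have hnn : 0 ≤ 2 / (x 0 + x 1) := by positivity
      have he : 2 / (x 0 + x 1) * (x 0 + x 1) = 2 := div_mul_cancel₀ _ hu.ne'
      generalize 2 / (x 0 + x 1) = c at *
      refine ⟨![c * x 0, c * x 1, 0], ⟨?_, ?_⟩,
        ![x 0 - c * x 0, x 1 - c * x 1, x 2], ⟨?_, ?_⟩, ?_⟩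
      · intro i; fin_cases i <;> simp <;> positivity
      · simp; linarith
      · intro i; fin_cases i <;> simp <;> nlinarith
      · simp [Fin.sum_univ_succ]; linarith
      · ext i; fin_cases i <;> simp
    · refine ⟨![x 0, x 1, (2 - x 0 - x 1) / 2], ⟨?_, ?_⟩,
        ![0, 0, x 2 - (2 - x 0 - x 1) / 2], ⟨?_, ?_⟩, ?_⟩
      · intro i; fin_cases i <;> simp <;> linarith
      · simp; linarith
      · intro i; fin_cases i <;> simp <;> linarith
      · simp [Fin.sum_univ_succ]; linarith
      · ext i; fin_cases i <;> simp

lemma triA_null : volume triA = 0 := by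
  let f : (Fin 3 → ℝ) →ₗ[ℝ] ℝ := LinearMap.proj (R := ℝ) (φ := fun _ : Fin 3 => ℝ) 0 +
    LinearMap.proj (R := ℝ) (φ := fun _ : Fin 3 => ℝ) 1 + (2:ℝ) • LinearMap.proj (R := ℝ) (φ := fun _ : Fin 3 => ℝ) 2
  let s : AffineSubspace ℝ (Fin 3 → ℝ) := AffineSubspace.mk' ![2,0,0] (LinearMap.ker f)
  have hm : ∀ x, x ∈ s ↔ x 0 + x 1 + 2 * x 2 = 2 := by
    intro x
    simp [s, f, AffineSubspace.mem_mk']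
    change x 0 - 2 + x 1 + 2 * x 2 = 0 ↔ _
    constructor <;> intro h <;> linarith
  have hs : s ≠ ⊤ := by
    intro h
    have : (0 : Fin 3 → ℝ) ∈ s := by rw [h]; trivial
    rw [hm] at this
    simp at this
  refine measure_mono_null ?_ (Measure.addHaar_affineSubspace volume s hs)
  intro x hx
  exact (hm x).2 hx.2

lemma volR (l : ℝ) (hl : 0 < l) :
    (volume (regR l)).toReal = ((2 + l) ^ 3 - 8) / 6 := by
  let v : Fin 3 → ℝ := ![0, 0, l]
  let C' : Set (Fin 3 → ℝ) := {x | (∀ i, 0 ≤ x i) ∧ x 0 + x 1 + 2 * x 2 < 2}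
  let C : Set (Fin 3 → ℝ) := {x | (∀ i, 0 ≤ x i) ∧ x 0 + x 1 + 2 * x 2 ≤ 2}
  let F : Set (Fin 3 → ℝ) := {x | (∀ i, 0 ≤ x i) ∧ x 2 < l ∧ x 0 + x 1 + x 2 ≤ 2 + l}
  have hT (t : ℝ) : solidSimplex 3 t = {x | (∀ i, 0 ≤ x i) ∧ x 0 + x 1 + x 2 ≤ t} := by
    simp only [solidSimplex, Fin.sum_univ_three]
  have mpos : MeasurableSet {x : Fin 3 → ℝ | ∀ i, 0 ≤ x i} := by
    simp only [Set.ofPred_forall]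
    exact MeasurableSet.iInter fun i => measurableSet_le measurable_const (measurable_pi_apply i)
  have mC' : MeasurableSet C' := mpos.inter
    (measurableSet_lt (f := fun x : Fin 3 → ℝ => x 0 + x 1 + 2 * x 2) (g := fun _ => 2)
      (by fun_prop) (by fun_prop))
  have mF : MeasurableSet F := mpos.inter
    ((measurableSet_lt (f := fun x : Fin 3 → ℝ => x 2) (g := fun _ => l)
      (by fun_prop) (by fun_prop)).inter
      (measurableSet_le (f := fun x : Fin 3 → ℝ => x 0 + x 1 + x 2) (g := fun _ => 2 + l)
      (by fun_prop) (by fun_prop)))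
  have e1 : C' ∪ regR l = F ∪ (fun x => v + x) '' C := by
    rw [Set.image_add_left]
    ext x
    simp only [C', C, F, v, regR, Set.mem_union, Set.mem_preimage, Set.mem_ofPred_eq,
      Fin.forall_fin_succ, Pi.add_apply, Pi.neg_apply]
    simp
    grind
  have e2 : solidSimplex 3 (2 + l) = F ∪ (fun x => v + x) '' solidSimplex 3 2 := by
    rw [Set.image_add_left, hT, hT]
    ext x
    simp only [F, v, Set.mem_union, Set.mem_preimage, Set.mem_ofPred_eq,
      Fin.forall_fin_succ, Pi.add_apply, Pi.neg_apply]
    simp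
    grind
  have dF (X : Set (Fin 3 → ℝ)) (hX : ∀ x ∈ X, 0 ≤ x 2) : Disjoint F ((fun x => v + x) '' X) := by
    rw [Set.disjoint_left]
    rintro _ h ⟨y, hy, rfl⟩
    have h1 := h.2.1
    have := hX y hy
    simp [v] at h1
    linarith
  have d1 : Disjoint C' (regR l) := by
    rw [Set.disjoint_left]
    rintro x h h'
    linarith [h.2, h'.2.1]
  have m1 := congrArg volume e1
  rw [measure_union' d1 mC', measure_union' (dF C fun x hx => hx.1 2) mF, Set.image_add_left,
    measure_preimage_add] at m1
  have m2 := congrArg volume e2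
  rw [measure_union' (dF _ fun x hx => hx.1 2) mF, Set.image_add_left,
    measure_preimage_add, solidSimplex_volume 3 _ (by linarith),
    solidSimplex_volume 3 _ (by norm_num)] at m2
  have hC : volume C = volume C' := by
    apply le_antisymm
    · calc volume C ≤ volume (C' ∪ triA) := measure_mono (by
            rintro x ⟨h, h'⟩
            rcases h'.lt_or_eq with h' | h'
            · exact Or.inl ⟨h, h'⟩
            · exact Or.inr ⟨h, h'⟩)
        _ ≤ volume C' + volume triA := measure_union_le _ _
        _ = volume C' := by rw [triA_null, add_zero]
    · exact measure_mono fun x hx => ⟨hx.1, hx.2.le⟩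
  have fC : volume C' ≠ ⊤ := by
    refine ne_top_of_le_ne_top ?_ (measure_mono (?_ : C' ⊆ solidSimplex 3 2))
    · rw [solidSimplex_volume 3 2 (by norm_num)]; exact ENNReal.ofReal_ne_top
    · rw [hT]
      rintro x ⟨h, h'⟩
      exact ⟨h, by linarith [h 2]⟩
  rw [hC, add_comm, ENNReal.add_left_inj fC] at m1
  rw [m1]
  have fF : volume F ≠ ⊤ := by
    intro h
    rw [h] at m2
    simp at m2
  have m3 := congrArg ENNReal.toReal m2
  rw [ENNReal.toReal_add fF ENNReal.ofReal_ne_top, ENNReal.toReal_ofReal (by positivity),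
    ENNReal.toReal_ofReal (by positivity)] at m3
  norm_num [Nat.factorial] at m3
  linarith

/-- in a Henneberg I step the mixed volume of the projections of
the three new Newton polytopes to the coordinates `(x_{n+1}, y_{n+1}, s_{n+1})`
equals `2`:  `MV₃(conv{2ξ₁, 2ξ₂, ξ₃}, conv{0,ξ₁,ξ₂,ξ₃}, conv{0,ξ₁,ξ₂,ξ₃}) = 2`. -/
theorem mixedVolume_hennebergI_projection :
    mixedVolume
      ![convexHull ℝ ({![2,0,0], ![0,2,0], ![0,0,1]} : Set (Fin 3 → ℝ)),
        convexHull ℝ ({![0,0,0], ![1,0,0], ![0,1,0], ![0,0,1]} : Set (Fin 3 → ℝ)),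
        convexHull ℝ ({![0,0,0], ![1,0,0], ![0,1,0], ![0,0,1]} : Set (Fin 3 → ℝ))] = 2 := by
  rw [convA, convB]
  have hset : (Finset.univ.powerset.filter (fun S : Finset (Fin 3) => S.Nonempty)) =
      {{0}, {1}, {2}, {0, 1}, {0, 2}, {1, 2}, {0, 1, 2}} := by decide
  have h01 : (0 : Fin 3) ≠ 1 := by decide
  have h02 : (0 : Fin 3) ≠ 2 := by decide
  have h12 : (1 : Fin 3) ≠ 2 := by decide
  unfold mixedVolume
  rw [hset]
  have s3 (f : Fin 3 → Set (Fin 3 → ℝ)) :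
      ∑ i ∈ ({0, 1, 2} : Finset (Fin 3)), f i = f 0 + (f 1 + f 2) := by
    rw [Finset.sum_insert (by decide), Finset.sum_pair h12]
  have key (g : Finset (Fin 3) → ℝ) :
      ∑ S ∈ ({{0}, {1}, {2}, {0, 1}, {0, 2}, {1, 2}, {0, 1, 2}} : Finset (Finset (Fin 3))), g S =
      g {0} + (g {1} + (g {2} + (g {0, 1} + (g {0, 2} + (g {1, 2} + g {0, 1, 2}))))) := by
    rw [Finset.sum_insert (by decide), Finset.sum_insert (by decide),
      Finset.sum_insert (by decide), Finset.sum_insert (by decide),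
      Finset.sum_insert (by decide), Finset.sum_insert (by decide), Finset.sum_singleton]
  rw [key]
  have c1 : ({0, 1} : Finset (Fin 3)).card = 2 := by decide
  have c2 : ({0, 2} : Finset (Fin 3)).card = 2 := by decide
  have c3 : ({1, 2} : Finset (Fin 3)).card = 2 := by decide
  have c4 : ({0, 1, 2} : Finset (Fin 3)).card = 3 := by decide
  rw [c1, c2, c3, c4, Finset.sum_pair h01, Finset.sum_pair h02, Finset.sum_pair h12, s3]
  simp only [Finset.sum_singleton, Finset.card_singleton, Matrix.cons_val]
  rw [BB, sumR, sumR, volR _ (by norm_num), volR _ (by norm_num), triA_null,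
    solidSimplex_volume 3 1 (by norm_num), solidSimplex_volume 3 2 (by norm_num),
    ENNReal.toReal_ofReal (by positivity), ENNReal.toReal_ofReal (by positivity)]
  norm_num [Nat.factorial]
end
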